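/- Let Ē(f, b, g, q) = 1/(fb) + f^{3/2}/√b + 1/(fb + gq) + g^{3/2}/√q on 𝒰 and let H_Ē(U) denote its Hessian matrix with respect to (f, b, g, q). Then for every U ∈ 𝒰 and each k ∈ {1, 2, 3, 4}, the quadratic form of the Hessian along the k-th right eigenvector is strictly positive: rₖ(U)ᵀ·H_Ē(U)·rₖ(U) > 0, where r₁(U) = (−f/b, 1, 0, 0), r₂(U) = ((fb−3gq)/(4qb), (fb−3gq)/(4qf), g/q, 1), r₃(U) = (0, 0, −g/q, 1), r₄(U) = (0, 0, g/q, 1). -/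

import Mathlib

/-- The right eigenvectors of the flux Jacobian of the reduced two-phase
thin-film system. -/
noncomputable def eigvec (f b g q : ℝ) : Fin 4 → (Fin 4 → ℝ) :=
  ![![-f/b, 1, 0, 0],
    ![(f*b - 3*(g*q))/(4*q*b), (f*b - 3*(g*q))/(4*q*f), g/q, 1],
    ![0, 0, -g/q, 1],
    ![0, 0, g/q, 1]]

/-- The entropy `Ē = 1/(fb) + f^{3/2}/√b + 1/(fb+gq) + g^{3/2}/√q`. -/
noncomputable def entropyBarE (U : Fin 4 → ℝ) : ℝ :=
  1 / (U 0 * U 1) + (U 0) ^ ((3:ℝ)/2) / Real.sqrt (U 1)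
    + 1 / (U 0 * U 1 + U 2 * U 3) + (U 2) ^ ((3:ℝ)/2) / Real.sqrt (U 3)

/-!
Write a direction as `(f w₀, b w₁, g w₂, q w₃)`. The term `f^{3/2}/√b` is the perspective of
`t ↦ t^{3/2}` and contributes a nonnegative multiple of `(w₀ - w₁)²`, likewise `g^{3/2}/√q` and
`(w₂ - w₃)²`, while the two reciprocals contribute rational functions of `p = fb` and `r = gq` only.
For `r₁` and `r₃` the weights are opposite in the one active pair, and every contribution is
nonnegative. For `r₂` and `r₄` the weights agree within each pair, so the perspective terms drop
out; what remains is a positive multiple of `3r - p` for `r₄`, and of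
`(3r - p) ((3r - p) (3 (p + r)² - p²) - 4p³)` for `r₂`. Both are positive when `p < r`.
-/

open Filter Topology

section TwoJet

variable {𝕜 : Type*} [NontriviallyNormedField 𝕜] {E : Type*} [NormedAddCommGroup E]
  [NormedSpace 𝕜 E] {F G : E → 𝕜} {u v : E} {a₁ a₂ b₁ b₂ : 𝕜}

/-- `F` is `C²` at `u`, and its first and second derivatives at `u` in the direction `v` are `a₁`
and `a₂`. Bundling the regularity with the two values gives a calculus in which Hessians are
computed along with the proof that they exist. -/
structure HasTwoJetAlong (F : E → 𝕜) (a₁ a₂ : 𝕜) (u v : E) : Prop where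
  contDiffAt : ContDiffAt 𝕜 2 F u
  fderiv_apply : fderiv 𝕜 F u v = a₁
  fderiv_fderiv_apply : fderiv 𝕜 (fderiv 𝕜 F) u v v = a₂

namespace HasTwoJetAlong

theorem iteratedFDeriv_two_apply (hF : HasTwoJetAlong F a₁ a₂ u v) :
    iteratedFDeriv 𝕜 2 F u ![v, v] = a₂ := by
  simpa [_root_.iteratedFDeriv_two_apply] using hF.fderiv_fderiv_apply

theorem hasFDerivAt (hF : HasTwoJetAlong F a₁ a₂ u v) : HasFDerivAt F (fderiv 𝕜 F u) u :=
  (hF.contDiffAt.differentiableAt two_ne_zero).hasFDerivAt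

theorem hasFDerivAt_fderiv (hF : HasTwoJetAlong F a₁ a₂ u v) :
    HasFDerivAt (fderiv 𝕜 F) (fderiv 𝕜 (fderiv 𝕜 F) u) u :=
  ((hF.contDiffAt.fderiv_right (m := 1) one_add_one_eq_two.le).differentiableAt
    one_ne_zero).hasFDerivAt

theorem eventually_differentiableAt (hF : HasTwoJetAlong F a₁ a₂ u v) :
    ∀ᶠ y in 𝓝 u, DifferentiableAt 𝕜 F y :=
  (hF.contDiffAt.eventually (by simp)).mono fun _ hy ↦ hy.differentiableAt two_ne_zero

theorem of_clm (L : E →L[𝕜] 𝕜) (u v : E) : HasTwoJetAlong L (L v) 0 u v where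
  contDiffAt := L.contDiff.contDiffAt
  fderiv_apply := by rw [L.fderiv]
  fderiv_fderiv_apply := by
    have hL : fderiv 𝕜 L = fun _ ↦ L := funext fun _ ↦ L.fderiv
    simp [hL]

theorem add (hF : HasTwoJetAlong F a₁ a₂ u v) (hG : HasTwoJetAlong G b₁ b₂ u v) :
    HasTwoJetAlong (fun x ↦ F x + G x) (a₁ + b₁) (a₂ + b₂) u v where
  contDiffAt := hF.contDiffAt.add hG.contDiffAt
  fderiv_apply := by
    simp [(hF.hasFDerivAt.fun_add hG.hasFDerivAt).fderiv, hF.fderiv_apply, hG.fderiv_apply]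
  fderiv_fderiv_apply := by
    have fderiv_eq : fderiv 𝕜 (fun x ↦ F x + G x) =ᶠ[𝓝 u] fun y ↦ fderiv 𝕜 F y + fderiv 𝕜 G y := by
      filter_upwards [hF.eventually_differentiableAt, hG.eventually_differentiableAt] with y hFy hGy
      exact fderiv_fun_add hFy hGy
    simp [fderiv_eq.fderiv_eq, (hF.hasFDerivAt_fderiv.fun_add hG.hasFDerivAt_fderiv).fderiv,
      hF.fderiv_fderiv_apply, hG.fderiv_fderiv_apply]

theorem mul (hF : HasTwoJetAlong F a₁ a₂ u v) (hG : HasTwoJetAlong G b₁ b₂ u v) :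
    HasTwoJetAlong (fun x ↦ F x * G x) (a₁ * G u + F u * b₁)
      (a₂ * G u + 2 * a₁ * b₁ + F u * b₂) u v where
  contDiffAt := hF.contDiffAt.mul hG.contDiffAt
  fderiv_apply := by
    simp only [(hF.hasFDerivAt.fun_mul hG.hasFDerivAt).fderiv, add_apply, smul_apply, smul_eq_mul,
      hF.fderiv_apply, hG.fderiv_apply]
    ring
  fderiv_fderiv_apply := by
    have fderiv_eq : fderiv 𝕜 (fun x ↦ F x * G x) =ᶠ[𝓝 u]
        fun y ↦ F y • fderiv 𝕜 G y + G y • fderiv 𝕜 F y := by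
      filter_upwards [hF.eventually_differentiableAt, hG.eventually_differentiableAt] with y hFy hGy
      exact fderiv_fun_mul hFy hGy
    have hasFDerivAt_fderiv_mul := (hF.hasFDerivAt.fun_smul hG.hasFDerivAt_fderiv).fun_add
      (hG.hasFDerivAt.fun_smul hF.hasFDerivAt_fderiv)
    simp only [fderiv_eq.fderiv_eq, hasFDerivAt_fderiv_mul.fderiv, add_apply, smul_apply,
      ContinuousLinearMap.smulRight_apply, smul_eq_mul, hF.fderiv_apply, hG.fderiv_apply,
      hF.fderiv_fderiv_apply, hG.fderiv_fderiv_apply]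
    ring

theorem comp {h h' : 𝕜 → 𝕜} {h'' : 𝕜} (hh : ContDiffAt 𝕜 2 h (F u))
    (hh' : ∀ᶠ y in 𝓝 (F u), HasDerivAt h (h' y) y) (hh'' : HasDerivAt h' h'' (F u))
    (hF : HasTwoJetAlong F a₁ a₂ u v) :
    HasTwoJetAlong (fun x ↦ h (F x)) (h' (F u) * a₁) (h'' * a₁ ^ 2 + h' (F u) * a₂) u v where
  contDiffAt := hh.comp u hF.contDiffAt
  fderiv_apply := by
    have hasFDerivAt_comp : HasFDerivAt (fun x ↦ h (F x)) (h' (F u) • fderiv 𝕜 F u) u :=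
      hh'.self_of_nhds.comp_hasFDerivAt u hF.hasFDerivAt
    simp [hasFDerivAt_comp.fderiv, hF.fderiv_apply]
  fderiv_fderiv_apply := by
    have fderiv_eq : fderiv 𝕜 (fun x ↦ h (F x)) =ᶠ[𝓝 u] fun y ↦ h' (F y) • fderiv 𝕜 F y := by
      filter_upwards [hF.hasFDerivAt.continuousAt.eventually hh', hF.eventually_differentiableAt]
        with y hhy hFy
      exact (hhy.comp_hasFDerivAt y hFy.hasFDerivAt).fderiv
    have hasFDerivAt_fderiv_comp :=
      (hh''.comp_hasFDerivAt u hF.hasFDerivAt).fun_smul hF.hasFDerivAt_fderiv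
    simp only [Function.comp_apply] at hasFDerivAt_fderiv_comp
    simp only [fderiv_eq.fderiv_eq, hasFDerivAt_fderiv_comp.fderiv, add_apply, smul_apply,
      ContinuousLinearMap.smulRight_apply, smul_eq_mul, hF.fderiv_apply, hF.fderiv_fderiv_apply]
    ring

theorem inv (hF : HasTwoJetAlong F a₁ a₂ u v) (hFu : F u ≠ 0) :
    HasTwoJetAlong (fun x ↦ (F x)⁻¹) (-a₁ / F u ^ 2) (2 * a₁ ^ 2 / F u ^ 3 - a₂ / F u ^ 2) u v := by
  have hasDerivAt_deriv_inv : HasDerivAt (fun y : 𝕜 ↦ -(y ^ 2)⁻¹) (2 / F u ^ 3) (F u) := by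
    refine ((hasDerivAt_pow 2 (F u)).inv (pow_ne_zero 2 hFu)).neg.congr_deriv ?_
    simp only [Nat.cast_ofNat, Nat.add_one_sub_one, pow_one]
    field
  convert hF.comp (contDiffAt_inv 𝕜 hFu)
    ((eventually_ne_nhds hFu).mono fun y hy ↦ hasDerivAt_inv hy) hasDerivAt_deriv_inv using 1 <;>
  ring

end HasTwoJetAlong

end TwoJet

section Real

variable {E : Type*} [NormedAddCommGroup E] [NormedSpace ℝ E] {F G : E → ℝ} {u v : E}
  {a₁ a₂ b₁ : ℝ}

theorem HasTwoJetAlong.rpow_const (hF : HasTwoJetAlong F a₁ a₂ u v) (hFu : F u ≠ 0) (α : ℝ) :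
    HasTwoJetAlong (fun x ↦ F x ^ α) (α * F u ^ (α - 1) * a₁)
      (α * ((α - 1) * F u ^ (α - 1 - 1)) * a₁ ^ 2 + α * F u ^ (α - 1) * a₂) u v :=
  hF.comp (Real.contDiffAt_rpow_const_of_ne hFu)
    ((eventually_ne_nhds hFu).mono fun _ hy ↦ Real.hasDerivAt_rpow_const (.inl hy))
    ((Real.hasDerivAt_rpow_const (.inl hFu)).const_mul α)

/-- `F ^ α / G ^ (α - 1)` is the perspective `G · (F / G) ^ α` of the power `t ↦ t ^ α`; this is
why its second derivative is a single square. -/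
theorem HasTwoJetAlong.rpow_div_rpow_sub_one (hF : HasTwoJetAlong F a₁ 0 u v)
    (hG : HasTwoJetAlong G b₁ 0 u v) (hFu : F u ≠ 0) (hGu : 0 < G u) (α : ℝ) :
    HasTwoJetAlong (fun x ↦ F x ^ α / G x ^ (α - 1))
      (F u ^ α / G u ^ (α - 1) * (α * (a₁ / F u) - (α - 1) * (b₁ / G u)))
      (α * (α - 1) * (F u ^ α / G u ^ (α - 1)) * (a₁ / F u - b₁ / G u) ^ 2) u v := by
  have hGα : G u ^ (α - 1) ≠ 0 := (Real.rpow_pos_of_pos hGu _).ne'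
  simp only [div_eq_mul_inv (_ ^ α)]
  convert (hF.rpow_const hFu α).mul ((hG.rpow_const hGu.ne' (α - 1)).inv hGα) using 1 <;>
  · simp only [Real.rpow_sub_one hFu, Real.rpow_sub_one hGu.ne'] at hGα ⊢
    field_simp
    ring

end Real

section Entropy

theorem rpow_three_halves_sub_one (x : ℝ) : x ^ (3 / 2 - 1 : ℝ) = √x := by
  rw [Real.sqrt_eq_rpow]
  norm_num

theorem entropyBarE_eq_inv_add_rpow : entropyBarE = fun U ↦
    (U 0 * U 1)⁻¹ + U 0 ^ (3 / 2 : ℝ) / U 1 ^ (3 / 2 - 1 : ℝ)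
      + (U 0 * U 1 + U 2 * U 3)⁻¹ + U 2 ^ (3 / 2 : ℝ) / U 3 ^ (3 / 2 - 1 : ℝ) := by
  funext U
  simp only [entropyBarE, one_div, rpow_three_halves_sub_one]

/-- Writing the direction as `U * w` expresses it in the coordinates `log (U i)`, in which the
Hessian depends on the state only through `U 0 * U 1`, `U 2 * U 3` and the two perspective terms. -/
theorem iteratedFDeriv_two_entropyBarE_mul {U : Fin 4 → ℝ} (hU : ∀ i, 0 < U i) (w : Fin 4 → ℝ) :
    iteratedFDeriv ℝ 2 entropyBarE U ![U * w, U * w] =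
      2 * (w 0 ^ 2 + w 0 * w 1 + w 1 ^ 2) / (U 0 * U 1)
      + 3 / 4 * (U 0 ^ (3 / 2 : ℝ) / √(U 1)) * (w 0 - w 1) ^ 2
      + (2 * (U 0 * U 1 * (w 0 + w 1) + U 2 * U 3 * (w 2 + w 3)) ^ 2 / (U 0 * U 1 + U 2 * U 3) ^ 3
        - 2 * (U 0 * U 1 * (w 0 * w 1) + U 2 * U 3 * (w 2 * w 3)) / (U 0 * U 1 + U 2 * U 3) ^ 2)
      + 3 / 4 * (U 2 ^ (3 / 2 : ℝ) / √(U 3)) * (w 2 - w 3) ^ 2 := by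
  have coord (i : Fin 4) : HasTwoJetAlong (fun x : Fin 4 → ℝ ↦ x i) (U i * w i) 0 U (U * w) :=
    .of_clm (.proj i) U (U * w)
  have prod_pos (i j : Fin 4) : 0 < U i * U j := mul_pos (hU i) (hU j)
  have prod_fb := (coord 0).mul (coord 1)
  have prod_gq := (coord 2).mul (coord 3)
  have jet := (((prod_fb.inv (prod_pos 0 1).ne').add
    ((coord 0).rpow_div_rpow_sub_one (coord 1) (hU 0).ne' (hU 1) (3 / 2))).add
    ((prod_fb.add prod_gq).inv (add_pos (prod_pos 0 1) (prod_pos 2 3)).ne')).add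
    ((coord 2).rpow_div_rpow_sub_one (coord 3) (hU 2).ne' (hU 3) (3 / 2))
  have inv_fb : 2 * (U 0 * U 1 * (w 0 + w 1)) ^ 2 / (U 0 * U 1) ^ 3
      - 2 * (U 0 * U 1 * (w 0 * w 1)) / (U 0 * U 1) ^ 2
      = 2 * (w 0 ^ 2 + w 0 * w 1 + w 1 ^ 2) / (U 0 * U 1) := by
    have hU₀ := hU 0
    have hU₁ := hU 1
    field
  rw [entropyBarE_eq_inv_add_rpow, jet.iteratedFDeriv_two_apply]
  simp only [rpow_three_halves_sub_one, mul_div_cancel_left₀ _ (hU _).ne']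
  linear_combination inv_fb

variable {f b g q : ℝ}

theorem state_pos (hf : 0 < f) (hb : 0 < b) (hg : 0 < g) (hq : 0 < q) (i : Fin 4) :
    0 < ![f, b, g, q] i := by
  fin_cases i <;> assumption

theorem iteratedFDeriv_two_entropyBarE_eigvec_zero
    (hf : 0 < f) (hb : 0 < b) (hg : 0 < g) (hq : 0 < q) :
    iteratedFDeriv ℝ 2 entropyBarE ![f, b, g, q] ![eigvec f b g q 0, eigvec f b g q 0] =
      (2 / (f * b) + 3 * (f ^ (3 / 2 : ℝ) / √b) + 2 * (f * b) / (f * b + g * q) ^ 2) / b ^ 2 := by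
  have eigvec_eq : eigvec f b g q 0 = ![f, b, g, q] * ![-1 / b, 1 / b, 0, 0] := by
    ext i
    fin_cases i <;> simp [eigvec, field]
  rw [eigvec_eq, iteratedFDeriv_two_entropyBarE_mul (state_pos hf hb hg hq)]
  simp only [Matrix.cons_val]
  field

theorem iteratedFDeriv_two_entropyBarE_eigvec_one
    (hf : 0 < f) (hb : 0 < b) (hg : 0 < g) (hq : 0 < q) :
    iteratedFDeriv ℝ 2 entropyBarE ![f, b, g, q] ![eigvec f b g q 1, eigvec f b g q 1] =
      (3 * (g * q) - f * b)
        * ((3 * (g * q) - f * b) * (3 * (f * b + g * q) ^ 2 - (f * b) ^ 2) - 4 * (f * b) ^ 3)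
        / (8 * (f * b) ^ 3 * (f * b + g * q) ^ 2 * q ^ 2) := by
  have eigvec_eq : eigvec f b g q 1 = ![f, b, g, q] *
      ![(f * b - 3 * (g * q)) / (4 * (f * b) * q), (f * b - 3 * (g * q)) / (4 * (f * b) * q),
        1 / q, 1 / q] := by
    ext i
    fin_cases i <;> simp [eigvec, field]
  have sum_ne : f * b + g * q ≠ 0 := by positivity
  rw [eigvec_eq, iteratedFDeriv_two_entropyBarE_mul (state_pos hf hb hg hq)]
  simp only [Matrix.cons_val]
  field

theorem iteratedFDeriv_two_entropyBarE_eigvec_two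
    (hf : 0 < f) (hb : 0 < b) (hg : 0 < g) (hq : 0 < q) :
    iteratedFDeriv ℝ 2 entropyBarE ![f, b, g, q] ![eigvec f b g q 2, eigvec f b g q 2] =
      (2 * (g * q) / (f * b + g * q) ^ 2 + 3 * (g ^ (3 / 2 : ℝ) / √q)) / q ^ 2 := by
  have eigvec_eq : eigvec f b g q 2 = ![f, b, g, q] * ![0, 0, -1 / q, 1 / q] := by
    ext i
    fin_cases i <;> simp [eigvec, field]
  rw [eigvec_eq, iteratedFDeriv_two_entropyBarE_mul (state_pos hf hb hg hq)]
  simp only [Matrix.cons_val]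
  field

theorem iteratedFDeriv_two_entropyBarE_eigvec_three
    (hf : 0 < f) (hb : 0 < b) (hg : 0 < g) (hq : 0 < q) :
    iteratedFDeriv ℝ 2 entropyBarE ![f, b, g, q] ![eigvec f b g q 3, eigvec f b g q 3] =
      2 * (g * q) * (3 * (g * q) - f * b) / ((f * b + g * q) ^ 3 * q ^ 2) := by
  have eigvec_eq : eigvec f b g q 3 = ![f, b, g, q] * ![0, 0, 1 / q, 1 / q] := by
    ext i
    fin_cases i <;> simp [eigvec, field]
  have sum_ne : f * b + g * q ≠ 0 := by positivity
  rw [eigvec_eq, iteratedFDeriv_two_entropyBarE_mul (state_pos hf hb hg hq)]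
  simp only [Matrix.cons_val]
  field

end Entropy

theorem four_mul_cube_lt_of_le {p r : ℝ} (hp : 0 < p) (hpr : p ≤ r) :
    4 * p ^ 3 < (3 * r - p) * (3 * (p + r) ^ 2 - p ^ 2) := by
  have two_mul_le : 2 * p ≤ 3 * r - p := by linarith
  have eleven_mul_sq_le : 11 * p ^ 2 ≤ 3 * (p + r) ^ 2 - p ^ 2 := by nlinarith
  calc 4 * p ^ 3 < 2 * p * (11 * p ^ 2) := by nlinarith [pow_pos hp 3]
    _ ≤ (3 * r - p) * (3 * (p + r) ^ 2 - p ^ 2) :=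
      mul_le_mul two_mul_le eleven_mul_sq_le (by positivity) (by linarith)

/-- Strict convexity criterion along the characteristic fields: for every
`U ∈ 𝒰` and each `k`, the quadratic form of the Hessian of `Ē` along the
`k`-th right eigenvector is strictly positive, `rₖ(U)ᵀ·H_Ē(U)·rₖ(U) > 0`.
The Hessian quadratic form is expressed as the second iterated derivative
evaluated at `(rₖ(U), rₖ(U))`. -/
theorem entropyBar_convex_along_eigvecs (f b g q : ℝ)
    (hf : 0 < f) (hb : 0 < b) (hg : 0 < g) (hq : 0 < q) (hU : f*b < g*q) :
    ∀ k : Fin 4,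
      0 < iteratedFDeriv ℝ 2 entropyBarE ![f, b, g, q]
            ![eigvec f b g q k, eigvec f b g q k] := by
  have hfb : 0 < f * b := mul_pos hf hb
  have gap_pos : 0 < 3 * (g * q) - f * b := by linarith
  have cubic_pos := sub_pos.2 (four_mul_cube_lt_of_le hfb hU.le)
  intro k
  match k with
  | 0 => rw [iteratedFDeriv_two_entropyBarE_eigvec_zero hf hb hg hq]; positivity
  | 1 => rw [iteratedFDeriv_two_entropyBarE_eigvec_one hf hb hg hq]; positivity
  | 2 => rw [iteratedFDeriv_two_entropyBarE_eigvec_two hf hb hg hq]; positivity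
  | 3 => rw [iteratedFDeriv_two_entropyBarE_eigvec_three hf hb hg hq]; positivity
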